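/- There exists a constant C > 0 depending only on Ω, a, b and c such that for every mesh, the finite element solution satisfies ‖u_h'‖_Ω ≤ C ‖f‖_Ω. Moreover, for every constant C₁ > 0 there exists a constant C > 0 depending only on Ω, a, b, c and C₁ such that if u ∈ H²(Ω) and the mesh satisfies max_i h_i ≤ C₁/N, then ‖(u − u_h)'‖_Ω ≤ C ‖r‖_Ω / N, where r = f + a' u' − b u' − c u. -/

import Mathlib

/-!
Setting of Huang–He, "Error analysis for equidistributing meshes":
the boundary value problem  −(a u')' + b u' + c u = f on Ω = (0,1), u(0)=u(1)=0,
its linear finite element discretization on a mesh 0 = x₀ < ⋯ < x_N = 1,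
and the residual-based equidistribution quantities.
-/

noncomputable section
open MeasureTheory Real

namespace EquidMesh

/-- L² norm on (0,1). -/
def L2 (g : ℝ → ℝ) : ℝ := Real.sqrt (∫ t in (0:ℝ)..1, (g t)^2)

/-- L¹ norm on (0,1). -/
def L1 (g : ℝ → ℝ) : ℝ := ∫ t in (0:ℝ)..1, |g t|

/-- The L^{2/3} quasi-norm on (0,1): (∫₀¹ |g|^{2/3})^{3/2}. -/
def Lp23 (g : ℝ → ℝ) : ℝ := (∫ t in (0:ℝ)..1, |g t| ^ ((2:ℝ)/3)) ^ ((3:ℝ)/2)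

/-- L^∞ norm (essential supremum of |g|) on (0,1). -/
def Linf (g : ℝ → ℝ) : ℝ := essSup (fun t => |g t|) (volume.restrict (Set.Ioo (0:ℝ) 1))

/-- Membership in L²(0,1). -/
def MemL2 (g : ℝ → ℝ) : Prop :=
  Measurable g ∧ IntervalIntegrable (fun t => (g t)^2) volume 0 1

/-- Membership in L^∞(0,1). -/
def MemLinf (g : ℝ → ℝ) : Prop :=
  Measurable g ∧ ∃ M : ℝ, ∀ᵐ x ∂(volume.restrict (Set.Ioo (0:ℝ) 1)), |g x| ≤ M

/-- `g` is absolutely continuous on [0,1] with derivative `g' ∈ L¹(0,1)`. -/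
def HasL1Deriv (g g' : ℝ → ℝ) : Prop :=
  Measurable g' ∧ IntervalIntegrable g' volume 0 1 ∧
    ∀ x ∈ Set.Icc (0:ℝ) 1, g x = g 0 + ∫ t in (0:ℝ)..x, g' t

/-- A function in H¹(0,1): absolutely continuous on [0,1], carried together with its
(a.e.) derivative, which lies in L²(0,1). -/
structure H1 where
  val : ℝ → ℝ
  dval : ℝ → ℝ
  dval_meas : Measurable dval
  dval_int : IntervalIntegrable dval volume 0 1
  dval_sq_int : IntervalIntegrable (fun t => (dval t)^2) volume 0 1
  ftc : ∀ x ∈ Set.Icc (0:ℝ) 1, val x = val 0 + ∫ t in (0:ℝ)..x, dval t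

/-- `u ∈ H²(0,1)`: the derivative `u'` is absolutely continuous with `u'' ∈ L²(0,1)`. -/
def H1.IsH2 (u : H1) : Prop :=
  ∃ u'' : ℝ → ℝ, Measurable u'' ∧ IntervalIntegrable u'' volume 0 1 ∧
    IntervalIntegrable (fun t => (u'' t)^2) volume 0 1 ∧
    ∀ x ∈ Set.Icc (0:ℝ) 1, u.dval x = u.dval 0 + ∫ t in (0:ℝ)..x, u'' t

/-- The coefficients of the elliptic problem on Ω = (0,1):
`a, b ∈ W^{1,∞}(Ω)`, `c ∈ L^∞(Ω)`, `a ≥ a₀ > 0`, and `c − b'/2 ≥ 0` a.e. -/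
structure Coeffs where
  a : ℝ → ℝ
  b : ℝ → ℝ
  c : ℝ → ℝ
  a' : ℝ → ℝ
  b' : ℝ → ℝ
  a0 : ℝ
  a0_pos : 0 < a0
  a_lb : ∀ x ∈ Set.Icc (0:ℝ) 1, a0 ≤ a x
  a'_meas : Measurable a'
  b'_meas : Measurable b'
  c_meas : Measurable c
  a'_int : IntervalIntegrable a' volume 0 1
  b'_int : IntervalIntegrable b' volume 0 1
  a'_bdd : ∃ M : ℝ, ∀ᵐ x ∂(volume.restrict (Set.Ioo (0:ℝ) 1)), |a' x| ≤ M
  b'_bdd : ∃ M : ℝ, ∀ᵐ x ∂(volume.restrict (Set.Ioo (0:ℝ) 1)), |b' x| ≤ M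
  c_bdd : ∃ M : ℝ, ∀ᵐ x ∂(volume.restrict (Set.Ioo (0:ℝ) 1)), |c x| ≤ M
  ftc_a : ∀ x ∈ Set.Icc (0:ℝ) 1, a x = a 0 + ∫ t in (0:ℝ)..x, a' t
  ftc_b : ∀ x ∈ Set.Icc (0:ℝ) 1, b x = b 0 + ∫ t in (0:ℝ)..x, b' t
  cb_nonneg : ∀ᵐ x ∂(volume.restrict (Set.Ioo (0:ℝ) 1)), 0 ≤ c x - b' x / 2

/-- The bilinear form B(u,v) = ∫₀¹ (a u' v' + b u' v + c u v) dx. -/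
def Coeffs.B (P : Coeffs) (u v : H1) : ℝ :=
  ∫ t in (0:ℝ)..1,
    (P.a t * u.dval t * v.dval t + P.b t * u.dval t * v.val t + P.c t * u.val t * v.val t)

/-- The right-hand side functional (f, v) = ∫₀¹ f v dx. -/
def ip (f : ℝ → ℝ) (v : H1) : ℝ := ∫ t in (0:ℝ)..1, f t * v.val t

/-- `u ∈ H¹₀(Ω)` is the weak solution: B(u,v) = (f,v) for all v ∈ H¹₀(Ω). -/
def Coeffs.IsWeakSolution (P : Coeffs) (f : ℝ → ℝ) (u : H1) : Prop :=
  u.val 0 = 0 ∧ u.val 1 = 0 ∧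
    ∀ v : H1, v.val 0 = 0 → v.val 1 = 0 → P.B u v = ip f v

/-- A mesh of N elements of Ω = (0,1): 0 = x₀ < x₁ < ⋯ < x_N = 1. -/
structure Mesh (N : ℕ) where
  x : ℕ → ℝ
  x_zero : x 0 = 0
  x_last : x N = 1
  x_mono : ∀ i < N, x i < x (i+1)

/-- Element length (the element of index `i` is `(x i, x (i+1))`, `0 ≤ i < N`). -/
def Mesh.h {N : ℕ} (m : Mesh N) (i : ℕ) : ℝ := m.x (i+1) - m.x i

/-- `v` is piecewise linear with respect to the mesh: its derivative is constant
inside each element. -/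
def Mesh.IsPL {N : ℕ} (m : Mesh N) (v : H1) : Prop :=
  ∀ i < N, ∃ s : ℝ, ∀ t ∈ Set.Ioo (m.x i) (m.x (i+1)), v.dval t = s

/-- `uh` is the linear finite element solution on the mesh `m`:
a continuous piecewise linear function vanishing at 0 and 1 with
B(u_h, v_h) = (f, v_h) for all piecewise linear v_h vanishing at 0 and 1. -/
def Coeffs.IsFESolution (P : Coeffs) (f : ℝ → ℝ) {N : ℕ} (m : Mesh N) (uh : H1) : Prop :=
  uh.val 0 = 0 ∧ uh.val 1 = 0 ∧ m.IsPL uh ∧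
    ∀ v : H1, v.val 0 = 0 → v.val 1 = 0 → m.IsPL v → P.B uh v = ip f v

/-- The residual of `w`: r = f + a' w' − b w' − c w. -/
def Coeffs.res (P : Coeffs) (f : ℝ → ℝ) (w : H1) : ℝ → ℝ :=
  fun t => f t + P.a' t * w.dval t - P.b t * w.dval t - P.c t * w.val t

/-- The element L² average ⟨g⟩_i = (h_i⁻¹ ∫_{K_i} g²)^{1/2}. -/
def Mesh.avg {N : ℕ} (m : Mesh N) (g : ℝ → ℝ) (i : ℕ) : ℝ :=
  Real.sqrt ((1 / m.h i) * ∫ t in (m.x i)..(m.x (i+1)), (g t)^2)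

/-- The intensity parameter α_h = (Σ_i h_i ⟨g⟩_i^{2/3})³. -/
def Mesh.alpha {N : ℕ} (m : Mesh N) (g : ℝ → ℝ) : ℝ :=
  (∑ i ∈ Finset.range N, m.h i * (m.avg g i) ^ ((2:ℝ)/3)) ^ 3

/-- The adaptation function value ρ_i = (1 + α_h⁻¹ ⟨g⟩_i²)^{1/3}. -/
def Mesh.rho {N : ℕ} (m : Mesh N) (g : ℝ → ℝ) (i : ℕ) : ℝ :=
  (1 + (m.alpha g)⁻¹ * (m.avg g i)^2) ^ ((1:ℝ)/3)

/-- σ_h = Σ_i ρ_i h_i. -/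
def Mesh.sigma {N : ℕ} (m : Mesh N) (g : ℝ → ℝ) : ℝ :=
  ∑ i ∈ Finset.range N, m.rho g i * m.h i

/-- The mesh equidistributes (the piecewise constant adaptation function built from) `g`:
ρ_i h_i = σ_h / N for all elements. -/
def Mesh.IsEquidistributing {N : ℕ} (m : Mesh N) (g : ℝ → ℝ) : Prop :=
  ∀ i < N, m.rho g i * m.h i = m.sigma g / (N:ℝ)

/-- Membership in the mesh set S_N: 1/(ρ₀ N) ≤ h_i ≤ 2/N for all i. -/
def Mesh.InS {N : ℕ} (m : Mesh N) (ρ0 : ℝ) : Prop :=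
  ∀ i < N, 1 / (ρ0 * (N:ℝ)) ≤ m.h i ∧ m.h i ≤ 2 / (N:ℝ)

/-- The maximum norm distance ‖X − X̃‖_∞ between two meshes with the same N. -/
def meshDist {N : ℕ} (m m' : Mesh N) : ℝ :=
  (Finset.range (N+1)).sup' (Finset.nonempty_range_iff.mpr (Nat.succ_ne_zero N))
    (fun i => |m.x i - m'.x i|)

/-- The energy norm squared ‖v‖_E² = ∫₀¹ (a v'² + (c − b'/2) v²) dx. -/
def Coeffs.energySq (P : Coeffs) (v : H1) : ℝ :=
  ∫ t in (0:ℝ)..1, (P.a t * (v.dval t)^2 + (P.c t - P.b' t / 2) * (v.val t)^2)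


/-- Lebesgue measure on the unit interval. -/
abbrev unitMeasure : Measure ℝ := volume.restrict (Set.Ioc (0:ℝ) 1)

lemma integral_eq_unitMeasure (g : ℝ → ℝ) : ∫ t in (0:ℝ)..1, g t = ∫ t, g t ∂unitMeasure :=
  intervalIntegral.integral_of_le zero_le_one

lemma memLp_two_of_measurable {g : ℝ → ℝ} (hg : Measurable g)
    (h : IntervalIntegrable (fun t => (g t) ^ 2) volume 0 1) : MemLp g 2 unitMeasure :=
  (memLp_two_iff_integrable_sq hg.aestronglyMeasurable).2
    ((intervalIntegrable_iff_integrableOn_Ioc_of_le zero_le_one).1 h)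

lemma memLp_top_of_continuousOn {g : ℝ → ℝ} (hg : ContinuousOn g (Set.Icc 0 1)) :
    MemLp g ⊤ unitMeasure := by
  obtain ⟨M, hM⟩ := isCompact_Icc.exists_bound_of_continuousOn hg
  refine memLp_top_of_bound ((hg.mono Set.Ioc_subset_Icc_self).aestronglyMeasurable
    measurableSet_Ioc) M ?_
  filter_upwards [ae_restrict_mem measurableSet_Ioc] with x hx
  exact hM x (Set.Ioc_subset_Icc_self hx)

lemma memLp_top_mul {f g : ℝ → ℝ} {p : ENNReal} (hf : MemLp f ⊤ unitMeasure)
    (hg : MemLp g p unitMeasure) : MemLp (fun t => f t * g t) p unitMeasure :=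
  hg.mul hf

lemma L2_sq (g : ℝ → ℝ) : L2 g ^ 2 = ∫ t, (g t) ^ 2 ∂unitMeasure := by
  rw [L2, integral_eq_unitMeasure, Real.sq_sqrt (integral_nonneg fun _ => sq_nonneg _)]

lemma L2_nonneg (g : ℝ → ℝ) : 0 ≤ L2 g := Real.sqrt_nonneg _

lemma L2_le_mul_L2 {f g : ℝ → ℝ} {M : ℝ} (hM : 0 ≤ M) (hf : MemLp f 2 unitMeasure)
    (hg : MemLp g 2 unitMeasure) (h : ∀ᵐ t ∂unitMeasure, |f t| ≤ M * |g t|) :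
    L2 f ≤ M * L2 g := by
  refine abs_le_of_sq_le_sq' ?_ (mul_nonneg hM (L2_nonneg g)) |>.2
  rw [mul_pow, L2_sq, L2_sq, ← integral_const_mul]
  refine integral_mono_ae hf.integrable_sq (hg.integrable_sq.const_mul _) ?_
  filter_upwards [h] with t ht
  calc f t ^ 2 = |f t| ^ 2 := (sq_abs _).symm
    _ ≤ (M * |g t|) ^ 2 := by gcongr
    _ = M ^ 2 * g t ^ 2 := by rw [mul_pow, sq_abs]

/-- The Cauchy–Schwarz inequality for real functions. -/
lemma integral_abs_mul_abs_le {μ : Measure ℝ} {f g : ℝ → ℝ} (hf : MemLp f 2 μ)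
    (hg : MemLp g 2 μ) :
    ∫ t, |f t| * |g t| ∂μ ≤ √(∫ t, (f t) ^ 2 ∂μ) * √(∫ t, (g t) ^ 2 ∂μ) := by
  have h := integral_mul_le_Lp_mul_Lq_of_nonneg (μ := μ) (p := 2) (q := 2)
    (f := fun t => |f t|) (g := fun t => |g t|) (by norm_num [Real.holderConjugate_iff])
    (.of_forall fun _ => abs_nonneg _) (.of_forall fun _ => abs_nonneg _)
    (by rw [ENNReal.ofReal_ofNat]; exact hf.abs) (by rw [ENNReal.ofReal_ofNat]; exact hg.abs)
  simpa [Real.sqrt_eq_rpow] using h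

lemma abs_integral_mul_mul_le {k f g : ℝ → ℝ} {M : ℝ} (hM : 0 ≤ M)
    (hk : ∀ᵐ t ∂unitMeasure, |k t| ≤ M)
    (hf : MemLp f 2 unitMeasure) (hg : MemLp g 2 unitMeasure) :
    |∫ t, k t * f t * g t ∂unitMeasure| ≤ M * (L2 f * L2 g) := by
  have hfg : Integrable (fun t => |f t| * |g t|) unitMeasure := hf.abs.integrable_mul hg.abs
  calc |∫ t, k t * f t * g t ∂unitMeasure|
      ≤ ∫ t, M * (|f t| * |g t|) ∂unitMeasure := by
        rw [← Real.norm_eq_abs]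
        refine norm_integral_le_of_norm_le (hfg.const_mul M) ?_
        filter_upwards [hk] with t ht
        rw [Real.norm_eq_abs, abs_mul, abs_mul, mul_assoc]
        gcongr
    _ = M * ∫ t, |f t| * |g t| ∂unitMeasure := integral_const_mul _ _
    _ ≤ M * (L2 f * L2 g) := by
        gcongr
        rw [L2, L2, integral_eq_unitMeasure, integral_eq_unitMeasure]
        exact integral_abs_mul_abs_le hf hg

/-- `g` is absolutely continuous on `[0,1]` with a.e. derivative `g'`. -/
structure HasACDeriv (g g' : ℝ → ℝ) : Prop where
  ac : AbsolutelyContinuousOnInterval g 0 1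
  deriv : ∀ᵐ x, x ∈ Set.Ioo (0:ℝ) 1 → HasDerivAt g (g' x) x

lemma _root_.AbsolutelyContinuousOnInterval.congr {f g : ℝ → ℝ} {a b : ℝ}
    (hf : AbsolutelyContinuousOnInterval f a b) (h : Set.EqOn f g (Set.uIcc a b)) :
    AbsolutelyContinuousOnInterval g a b := by
  rw [absolutelyContinuousOnInterval_iff] at hf ⊢
  intro ε hε
  obtain ⟨δ, hδ, H⟩ := hf ε hε
  refine ⟨δ, hδ, fun E hE hd => ?_⟩
  convert H E hE hd using 2 with i hi
  have := hE.1 i hi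
  rw [h this.1, h this.2]

lemma HasACDeriv.of_integral {g g' : ℝ → ℝ} (hi : IntervalIntegrable g' volume 0 1)
    (h : ∀ x ∈ Set.Icc (0:ℝ) 1, g x = g 0 + ∫ t in (0:ℝ)..x, g' t) : HasACDeriv g g' where
  ac := by
    have h0 : AbsolutelyContinuousOnInterval (fun _ : ℝ => g 0) 0 1 :=
      contDiffOn_const.absolutelyContinuousOnInterval
    refine (h0.add (hi.absolutelyContinuousOnInterval_intervalIntegral (c := 0)
      (by simp))).congr ?_
    intro x hx
    rw [Set.uIcc_of_le zero_le_one] at hx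
    exact (h x hx).symm
  deriv := by
    filter_upwards [hi.ae_hasDerivAt_integral] with x hx hx'
    have := (hx (by rw [Set.uIcc_of_le zero_le_one]; exact Set.Ioo_subset_Icc_self hx') 0
      (by simp)).const_add (g 0)
    refine this.congr_of_eventuallyEq ?_
    filter_upwards [Ioo_mem_nhds hx'.1 hx'.2] with y hy
    exact h y (Set.Ioo_subset_Icc_self hy)

lemma HasACDeriv.mul {f f' g g' : ℝ → ℝ} (hf : HasACDeriv f f') (hg : HasACDeriv g g') :
    HasACDeriv (fun t => f t * g t) (fun t => f' t * g t + f t * g' t) where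
  ac := hf.ac.mul hg.ac
  deriv := by
    filter_upwards [hf.deriv, hg.deriv] with x h1 h2 hx
    exact (h1 hx).mul (h2 hx)

lemma HasACDeriv.continuousOn {g g' : ℝ → ℝ} (h : HasACDeriv g g') :
    ContinuousOn g (Set.Icc 0 1) := by
  simpa [Set.uIcc_of_le] using h.ac.continuousOn

lemma HasACDeriv.integral_eq {g g' : ℝ → ℝ} (h : HasACDeriv g g') :
    ∫ t, g' t ∂unitMeasure = g 1 - g 0 := by
  rw [← h.ac.integral_deriv_eq_sub, integral_eq_unitMeasure, unitMeasure, ← restrict_Ioo_eq_restrict_Ioc]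
  refine integral_congr_ae ?_
  filter_upwards [ae_restrict_of_ae h.deriv, ae_restrict_mem measurableSet_Ioo] with x hx hx'
  exact (hx hx').deriv.symm

lemma H1.hasACDeriv (v : H1) : HasACDeriv v.val v.dval := .of_integral v.dval_int v.ftc

lemma H1.memLp_dval (v : H1) : MemLp v.dval 2 unitMeasure :=
  memLp_two_of_measurable v.dval_meas v.dval_sq_int

lemma H1.memLp_val (v : H1) : MemLp v.val ⊤ unitMeasure :=
  memLp_top_of_continuousOn v.hasACDeriv.continuousOn

lemma H1.memLp_two_val (v : H1) : MemLp v.val 2 unitMeasure :=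
  v.memLp_val.mono_exponent le_top

lemma H1.abs_val_le (v : H1) (h0 : v.val 0 = 0) {x : ℝ} (hx : x ∈ Set.Icc (0:ℝ) 1) :
    |v.val x| ≤ L2 v.dval := by
  have hint := v.memLp_dval.integrable one_le_two
  have h1 := integral_abs_mul_abs_le v.memLp_dval (memLp_const (μ := unitMeasure) (1:ℝ))
  rw [v.ftc x hx, h0, zero_add, intervalIntegral.integral_of_le hx.1, L2, integral_eq_unitMeasure]
  calc |∫ t in Set.Ioc 0 x, v.dval t| ≤ ∫ t in Set.Ioc 0 x, |v.dval t| :=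
        abs_integral_le_integral_abs
    _ ≤ ∫ t, |v.dval t| ∂unitMeasure :=
        setIntegral_mono_set hint.abs (.of_forall fun _ => abs_nonneg _)
          (Set.Ioc_subset_Ioc_right hx.2).eventuallyLE
    _ ≤ _ := by simpa using h1

/-- The Poincaré inequality on the unit interval. -/
lemma H1.L2_val_le (v : H1) (h0 : v.val 0 = 0) : L2 v.val ≤ L2 v.dval := by
  refine abs_le_of_sq_le_sq' ?_ (L2_nonneg _) |>.2
  rw [L2_sq]
  calc ∫ t, v.val t ^ 2 ∂unitMeasure ≤ ∫ _, L2 v.dval ^ 2 ∂unitMeasure := by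
        refine integral_mono_ae v.memLp_two_val.integrable_sq (integrable_const _) ?_
        filter_upwards [ae_restrict_mem measurableSet_Ioc] with x hx
        exact sq_le_sq.2 ((v.abs_val_le h0 (Set.Ioc_subset_Icc_self hx)).trans (le_abs_self _))
    _ = _ := by simp

lemma abs_ip_le {f : ℝ → ℝ} (hf : MemLp f 2 unitMeasure) (v : H1) (h0 : v.val 0 = 0) :
    |ip f v| ≤ L2 f * L2 v.dval := by
  have := abs_integral_mul_mul_le (k := fun _ => 1) zero_le_one (by simp) hf v.memLp_two_val
  rw [ip, integral_eq_unitMeasure]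
  simp only [one_mul] at this
  exact this.trans (mul_le_mul_of_nonneg_left (v.L2_val_le h0) (L2_nonneg f))

lemma Coeffs.hasACDeriv_a (P : Coeffs) : HasACDeriv P.a P.a' := .of_integral P.a'_int P.ftc_a

lemma Coeffs.hasACDeriv_b (P : Coeffs) : HasACDeriv P.b P.b' := .of_integral P.b'_int P.ftc_b

lemma memLp_top_of_measurable {g : ℝ → ℝ} (hg : Measurable g)
    (h : ∃ M : ℝ, ∀ᵐ x ∂(volume.restrict (Set.Ioo (0:ℝ) 1)), |g x| ≤ M) :
    MemLp g ⊤ unitMeasure := by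
  obtain ⟨M, hM⟩ := h
  rw [restrict_Ioo_eq_restrict_Ioc] at hM
  exact memLp_top_of_bound hg.aestronglyMeasurable M hM

lemma exists_bound_of_memLp_top {g : ℝ → ℝ} (hg : MemLp g ⊤ unitMeasure) :
    ∃ M : ℝ, 0 ≤ M ∧ ∀ᵐ x ∂unitMeasure, |g x| ≤ M := by
  refine ⟨(eLpNormEssSup g unitMeasure).toReal, ENNReal.toReal_nonneg, ?_⟩
  have h := hg.eLpNorm_ne_top
  rw [eLpNorm_exponent_top] at h
  filter_upwards [ae_le_eLpNormEssSup (f := g) (μ := unitMeasure)] with x hx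
  rw [← Real.norm_eq_abs, ← toReal_enorm]
  exact ENNReal.toReal_mono h hx

namespace Coeffs
variable (P : Coeffs)

lemma memLp_a : MemLp P.a ⊤ unitMeasure := memLp_top_of_continuousOn P.hasACDeriv_a.continuousOn

lemma memLp_b : MemLp P.b ⊤ unitMeasure := memLp_top_of_continuousOn P.hasACDeriv_b.continuousOn

lemma memLp_c : MemLp P.c ⊤ unitMeasure := memLp_top_of_measurable P.c_meas P.c_bdd

lemma memLp_a' : MemLp P.a' ⊤ unitMeasure := memLp_top_of_measurable P.a'_meas P.a'_bdd

lemma memLp_b' : MemLp P.b' ⊤ unitMeasure := memLp_top_of_measurable P.b'_meas P.b'_bdd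

lemma integrable_a (u v : H1) :
    Integrable (fun t => P.a t * u.dval t * v.dval t) unitMeasure :=
  (memLp_top_mul P.memLp_a u.memLp_dval).integrable_mul v.memLp_dval

lemma integrable_b (u v : H1) :
    Integrable (fun t => P.b t * u.dval t * v.val t) unitMeasure :=
  (memLp_top_mul P.memLp_b u.memLp_dval).integrable_mul v.memLp_two_val

lemma integrable_c (u v : H1) :
    Integrable (fun t => P.c t * u.val t * v.val t) unitMeasure :=
  (memLp_top_mul P.memLp_c u.memLp_two_val).integrable_mul v.memLp_two_val

lemma integrable_B (u v : H1) : Integrable (fun t => P.a t * u.dval t * v.dval t +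
    P.b t * u.dval t * v.val t + P.c t * u.val t * v.val t) unitMeasure :=
  ((P.integrable_a u v).add (P.integrable_b u v)).add (P.integrable_c u v)

lemma coercive (v : H1) (h0 : v.val 0 = 0) (h1 : v.val 1 = 0) :
    P.a0 * L2 v.dval ^ 2 ≤ P.B v v := by
  have hz := ((P.hasACDeriv_b.mul v.hasACDeriv).mul v.hasACDeriv).integral_eq
  simp only [h0, h1, mul_zero, sub_zero] at hz
  have hi : Integrable (fun t => (P.b' t * v.val t + P.b t * v.dval t) * v.val t +
      P.b t * v.val t * v.dval t) unitMeasure := by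
    have h1 := (memLp_top_mul P.memLp_b' v.memLp_two_val).integrable_mul v.memLp_two_val
    refine ((h1.add (P.integrable_b v v)).add (P.integrable_b v v)).congr (.of_forall fun t => ?_)
    simp only [Pi.add_apply, Pi.mul_apply]
    ring
  calc P.a0 * L2 v.dval ^ 2 = ∫ t, P.a0 * v.dval t ^ 2 ∂unitMeasure := by
        rw [L2_sq, integral_const_mul]
    _ ≤ ∫ t, (P.a t * v.dval t * v.dval t + P.b t * v.dval t * v.val t
          + P.c t * v.val t * v.val t) - 1 / 2 * ((P.b' t * v.val t + P.b t * v.dval t) * v.val t +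
          P.b t * v.val t * v.dval t) ∂unitMeasure := by
        refine integral_mono_ae (v.memLp_dval.integrable_sq.const_mul _)
          ((P.integrable_B v v).sub (hi.const_mul _)) ?_
        have hcb := P.cb_nonneg
        rw [restrict_Ioo_eq_restrict_Ioc] at hcb
        filter_upwards [hcb, ae_restrict_mem measurableSet_Ioc] with t ht ht'
        have ha := P.a_lb t (Set.Ioc_subset_Icc_self ht')
        have e1 := mul_nonneg (sub_nonneg.2 ha) (sq_nonneg (v.dval t))
        have e2 := mul_nonneg ht (sq_nonneg (v.val t))
        linarith
    _ = P.B v v := by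
        rw [integral_sub (P.integrable_B v v) (hi.const_mul _), integral_const_mul, hz, mul_zero,
          sub_zero, B, integral_eq_unitMeasure]

lemma exists_continuous : ∃ M : ℝ, 0 ≤ M ∧ ∀ u v : H1, u.val 0 = 0 → v.val 0 = 0 →
    |P.B u v| ≤ M * (L2 u.dval * L2 v.dval) := by
  obtain ⟨A, hA, hA'⟩ := exists_bound_of_memLp_top P.memLp_a
  obtain ⟨B, hB, hB'⟩ := exists_bound_of_memLp_top P.memLp_b
  obtain ⟨C, hC, hC'⟩ := exists_bound_of_memLp_top P.memLp_c
  refine ⟨A + B + C, by positivity, fun u v hu hv => ?_⟩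
  have e1 := abs_integral_mul_mul_le hA hA' u.memLp_dval v.memLp_dval
  have e2 : _ ≤ B * (L2 u.dval * L2 v.dval) :=
    (abs_integral_mul_mul_le hB hB' u.memLp_dval v.memLp_two_val).trans
      (mul_le_mul_of_nonneg_left
        (mul_le_mul_of_nonneg_left (v.L2_val_le hv) (L2_nonneg _)) hB)
  have e3 : _ ≤ C * (L2 u.dval * L2 v.dval) :=
    (abs_integral_mul_mul_le hC hC' u.memLp_two_val v.memLp_two_val).trans
      (mul_le_mul_of_nonneg_left
        (mul_le_mul (u.L2_val_le hu) (v.L2_val_le hv) (L2_nonneg _) (L2_nonneg _)) hC)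
  have hab : Integrable (fun t => P.a t * u.dval t * v.dval t + P.b t * u.dval t * v.val t)
      unitMeasure := (P.integrable_a u v).add (P.integrable_b u v)
  rw [Coeffs.B, integral_eq_unitMeasure, integral_add hab (P.integrable_c u v),
    integral_add (P.integrable_a u v) (P.integrable_b u v)]
  refine (abs_add_three _ _ _).trans ?_
  linarith

end Coeffs

/-- The difference of two `H¹` functions. -/
def H1.sub (u v : H1) : H1 where
  val t := u.val t - v.val t
  dval t := u.dval t - v.dval t
  dval_meas := u.dval_meas.sub v.dval_meas
  dval_int := u.dval_int.sub v.dval_int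
  dval_sq_int := (intervalIntegrable_iff_integrableOn_Ioc_of_le zero_le_one).2
    (u.memLp_dval.sub v.memLp_dval).integrable_sq
  ftc x hx := by
    have hs : Set.uIcc 0 x ⊆ Set.uIcc (0:ℝ) 1 :=
      Set.uIcc_subset_uIcc_left (by rwa [Set.uIcc_of_le zero_le_one])
    rw [u.ftc x hx, v.ftc x hx, intervalIntegral.integral_sub (u.dval_int.mono_set hs)
      (v.dval_int.mono_set hs)]
    ring

lemma Coeffs.B_sub_left (P : Coeffs) (u v w : H1) :
    P.B (u.sub v) w = P.B u w - P.B v w := by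
  simp only [B, integral_eq_unitMeasure]
  rw [← integral_sub (P.integrable_B u w) (P.integrable_B v w)]
  congr 1 with t
  simp only [H1.sub]
  ring

lemma Coeffs.B_sub_right (P : Coeffs) (u v w : H1) :
    P.B u (v.sub w) = P.B u v - P.B u w := by
  simp only [B, integral_eq_unitMeasure]
  rw [← integral_sub (P.integrable_B u v) (P.integrable_B u w)]
  congr 1 with t
  simp only [H1.sub]
  ring

/-- The `H¹` function with prescribed derivative and prescribed value at `0`. -/
def H1.ofDeriv (g : ℝ → ℝ) (hg : Measurable g) (h : MemLp g 2 unitMeasure) (y : ℝ) : H1 where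
  val x := y + ∫ t in (0:ℝ)..x, g t
  dval := g
  dval_meas := hg
  dval_int := (intervalIntegrable_iff_integrableOn_Ioc_of_le zero_le_one).2
    (h.integrable one_le_two)
  dval_sq_int := (intervalIntegrable_iff_integrableOn_Ioc_of_le zero_le_one).2 h.integrable_sq
  ftc x _ := by simp

lemma Coeffs.memLp_res (P : Coeffs) {f : ℝ → ℝ} (hf : MemLp f 2 unitMeasure) (u : H1) :
    MemLp (P.res f u) 2 unitMeasure :=
  ((hf.add (memLp_top_mul P.memLp_a' u.memLp_dval)).sub
    (memLp_top_mul P.memLp_b u.memLp_dval)).sub (memLp_top_mul P.memLp_c u.memLp_two_val)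

/-- A continuously differentiable function on `ℝ` as an element of `H¹(0,1)`. -/
def H1.ofContDiff (φ : ℝ → ℝ) (h : ContDiff ℝ 1 φ) : H1 where
  val := φ
  dval := _root_.deriv φ
  dval_meas := (h.continuous_deriv le_rfl).measurable
  dval_int := (h.continuous_deriv le_rfl).intervalIntegrable _ _
  dval_sq_int := ((h.continuous_deriv le_rfl).pow 2).intervalIntegrable _ _
  ftc x _ := by
    rw [intervalIntegral.integral_deriv_eq_sub
      (fun y _ => (h.differentiable one_ne_zero).differentiableAt)
      ((h.continuous_deriv le_rfl).intervalIntegrable _ _)]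
    ring

/-- An `H²` weak solution satisfies the differential equation almost everywhere. -/
lemma Coeffs.IsWeakSolution.ae_eq {P : Coeffs} {f : ℝ → ℝ} {u : H1}
    (hf : MemLp f 2 unitMeasure) (hu : P.IsWeakSolution f u) {u'' : ℝ → ℝ}
    (hm : MemLp u'' 2 unitMeasure) (hd : HasACDeriv u.dval u'') :
    ∀ᵐ t ∂unitMeasure, P.a t * u'' t + P.res f u t = 0 := by
  have hau : MemLp (fun t => P.a t * u'' t) 2 unitMeasure := memLp_top_mul P.memLp_a hm
  have hG : MemLp (fun t => P.a t * u'' t + P.res f u t) 2 unitMeasure :=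
    hau.add (P.memLp_res hf u)
  have key : ∀ᵐ t ∂unitMeasure, t ∈ Set.Ioo (0:ℝ) 1 → P.a t * u'' t + P.res f u t = 0 := by
    refine isOpen_Ioo.ae_eq_zero_of_integral_contDiff_smul_eq_zero
      ((hG.integrable one_le_two).locallyIntegrable.locallyIntegrableOn _) ?_
    intro φ hφ _ hsupp
    set w := H1.ofContDiff φ (hφ.of_le (by exact_mod_cast le_top)) with hw
    have hwv : w.val = φ := rfl
    have h0 : φ 0 = 0 := by
      by_contra h
      exact lt_irrefl _ (hsupp (subset_tsupport _ h)).1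
    have h1 : φ 1 = 0 := by
      by_contra h
      exact lt_irrefl _ (hsupp (subset_tsupport _ h)).2
    have hweak := hu.2.2 w h0 h1
    rw [Coeffs.B, ip, integral_eq_unitMeasure, integral_eq_unitMeasure] at hweak
    have hibp := ((P.hasACDeriv_a.mul hd).mul w.hasACDeriv).integral_eq
    simp only [hwv, h0, h1, mul_zero, sub_zero] at hibp
    have hi1 : Integrable (fun t => (P.a' t * u.dval t + P.a t * u'' t) * φ t +
        P.a t * u.dval t * w.dval t) unitMeasure :=
      (((memLp_top_mul P.memLp_a' u.memLp_dval).add hau).integrable_mul w.memLp_two_val).add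
        (P.integrable_a u w)
    have hi2 : Integrable (fun t => f t * w.val t) unitMeasure := hf.integrable_mul w.memLp_two_val
    have hi3 := P.integrable_B u w
    calc ∫ t, φ t • (P.a t * u'' t + P.res f u t) ∂unitMeasure
        = ∫ t, ((P.a' t * u.dval t + P.a t * u'' t) * φ t + P.a t * u.dval t * w.dval t) +
          (f t * w.val t - (P.a t * u.dval t * w.dval t + P.b t * u.dval t * w.val t +
            P.c t * u.val t * w.val t)) ∂unitMeasure := by
          congr 1 with t
          simp only [hwv, Coeffs.res, smul_eq_mul]
          ring
      _ = 0 := by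
          have hi4 : Integrable (fun t => f t * w.val t - (P.a t * u.dval t * w.dval t +
            P.b t * u.dval t * w.val t + P.c t * u.val t * w.val t)) unitMeasure := hi2.sub hi3
          rw [integral_add hi1 hi4, integral_sub hi2 hi3, hibp, hweak, sub_self, add_zero]
  have hmem : ∀ᵐ t ∂unitMeasure, t ∈ Set.Ioo (0:ℝ) 1 := by
    rw [unitMeasure, ← restrict_Ioo_eq_restrict_Ioc]
    exact ae_restrict_mem measurableSet_Ioo
  filter_upwards [key, hmem] with t h1 h2 using h1 h2

namespace Mesh
variable {N : ℕ} (m : Mesh N)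

lemma monotoneOn : MonotoneOn m.x (Set.Iic N) := by
  intro i _ j hj hij
  induction j, hij using Nat.le_induction with
  | base => exact le_rfl
  | succ k hk ih =>
    have hkN : k < N := hj
    exact (ih hkN.le).trans (m.x_mono k hkN).le

lemma Icc_subset {i : ℕ} (hi : i < N) :
    Set.Icc (m.x i) (m.x (i + 1)) ⊆ Set.Icc 0 1 := by
  refine Set.Icc_subset_Icc ?_ ?_
  · rw [← m.x_zero]
    exact m.monotoneOn (Nat.zero_le N) (Set.mem_Iic.2 hi.le) (Nat.zero_le _)
  · rw [← m.x_last]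
    exact m.monotoneOn (Set.mem_Iic.2 hi) Set.self_mem_Iic hi

lemma h_pos {i : ℕ} (hi : i < N) : 0 < m.h i := sub_pos.2 (m.x_mono i hi)

lemma intervalIntegrable {g : ℝ → ℝ} (hg : IntervalIntegrable g volume 0 1) {i : ℕ}
    (hi : i < N) : IntervalIntegrable g volume (m.x i) (m.x (i + 1)) := by
  refine hg.mono_set ?_
  rw [Set.uIcc_of_le (m.x_mono i hi).le, Set.uIcc_of_le zero_le_one]
  exact m.Icc_subset hi

lemma sum_integral {g : ℝ → ℝ} (hg : IntervalIntegrable g volume 0 1) :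
    ∑ i ∈ Finset.range N, ∫ t in (m.x i)..(m.x (i + 1)), g t = ∫ t in (0:ℝ)..1, g t := by
  rw [intervalIntegral.sum_integral_adjacent_intervals (a := m.x)
    (fun i hi => m.intervalIntegrable hg hi), m.x_zero, m.x_last]

/-- The function that takes the constant value `s i` on the `i`-th open element. -/
def stepFun (s : ℕ → ℝ) (t : ℝ) : ℝ :=
  ∑ i ∈ Finset.range N, (Set.Ioo (m.x i) (m.x (i + 1))).indicator (fun _ => s i) t

lemma stepFun_apply (s : ℕ → ℝ) {i : ℕ} (hi : i < N) {t : ℝ}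
    (ht : t ∈ Set.Ioo (m.x i) (m.x (i + 1))) : m.stepFun s t = s i := by
  rw [stepFun, Finset.sum_eq_single i]
  · exact Set.indicator_of_mem ht _
  · intro j hj hji
    have hj := Finset.mem_range.1 hj
    refine Set.indicator_of_notMem (fun hj' => ?_) _
    rcases lt_or_gt_of_ne hji with h | h
    · exact absurd (m.monotoneOn (Set.mem_Iic.2 hj) (Set.mem_Iic.2 hi.le) h)
        (not_le.2 (ht.1.trans hj'.2))
    · exact absurd (m.monotoneOn (Set.mem_Iic.2 hi) (Set.mem_Iic.2 hj.le) h)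
        (not_le.2 (hj'.1.trans ht.2))
  · intro h
    exact absurd (Finset.mem_range.2 hi) h

lemma measurable_stepFun (s : ℕ → ℝ) : Measurable (m.stepFun s) :=
  Finset.measurable_fun_sum _ fun _ _ => measurable_const.indicator measurableSet_Ioo

lemma memLp_stepFun (s : ℕ → ℝ) : MemLp (m.stepFun s) 2 unitMeasure :=
  memLp_finsetSum _ fun _ _ => (memLp_const _).indicator measurableSet_Ioo

lemma integral_stepFun (s : ℕ → ℝ) {i : ℕ} (hi : i < N) (F : ℝ → ℝ → ℝ) :
    ∫ t in (m.x i)..(m.x (i + 1)), F t (m.stepFun s t) =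
      ∫ t in (m.x i)..(m.x (i + 1)), F t (s i) := by
  rw [intervalIntegral.integral_of_le (m.x_mono i hi).le,
    intervalIntegral.integral_of_le (m.x_mono i hi).le, integral_Ioc_eq_integral_Ioo,
    integral_Ioc_eq_integral_Ioo]
  exact setIntegral_congr_fun measurableSet_Ioo fun t ht => by
    simp only [m.stepFun_apply s hi ht]

end Mesh

/-- Local Poincaré–Wirtinger estimate for the deviation of `g` from its mean. -/
lemma integral_sub_mean_sq_le {g g' : ℝ → ℝ} {a b : ℝ} (hab : a < b)
    (hg : ContinuousOn g (Set.Icc a b))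
    (hg' : MemLp g' 2 (volume.restrict (Set.Ioc a b)))
    (h : ∀ x ∈ Set.Icc a b, ∀ y ∈ Set.Icc a b, g x - g y = ∫ t in y..x, g' t) :
    ∫ t in a..b, (g t - (b - a)⁻¹ * ∫ r in a..b, g r) ^ 2 ≤
      (b - a) ^ 2 * ∫ t in a..b, (g' t) ^ 2 := by
  have hba : 0 < b - a := sub_pos.2 hab
  set S := ∫ t in Set.Ioc a b, |g' t| with hS
  have hgi : IntervalIntegrable g volume a b :=
    ContinuousOn.intervalIntegrable (by rwa [Set.uIcc_of_le hab.le])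
  have hint : IntegrableOn g' (Set.Ioc a b) := hg'.integrable one_le_two
  have hS2 : S ^ 2 ≤ (b - a) * ∫ t in a..b, (g' t) ^ 2 := by
    have := integral_abs_mul_abs_le hg' (memLp_const (1:ℝ))
    simp only [abs_one, mul_one, one_pow, integral_const, smul_eq_mul, measureReal_restrict_apply_univ,
      Real.volume_real_Ioc_of_le hab.le] at this
    have hS0 : 0 ≤ S := integral_nonneg fun _ => abs_nonneg _
    rw [intervalIntegral.integral_of_le hab.le]
    calc S ^ 2 ≤ _ := pow_le_pow_left₀ hS0 this 2
      _ = _ := by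
        rw [mul_pow, Real.sq_sqrt (integral_nonneg fun _ => sq_nonneg _), Real.sq_sqrt hba.le,
          mul_comm]
  have hpt : ∀ x ∈ Set.Icc a b, ∀ y ∈ Set.Icc a b, |g x - g y| ≤ S := by
    intro x hx y hy
    rw [h x hx y hy, ← Real.norm_eq_abs]
    refine intervalIntegral.norm_integral_le_integral_norm_uIoc.trans ?_
    refine setIntegral_mono_set hint.norm (.of_forall fun _ => norm_nonneg _)
      (Set.Ioc_subset_Ioc (le_min hy.1 hx.1) (max_le hy.2 hx.2)).eventuallyLE
  have hmean : ∀ x ∈ Set.Icc a b, |g x - (b - a)⁻¹ * ∫ r in a..b, g r| ≤ S := by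
    intro x hx
    have e : g x - (b - a)⁻¹ * ∫ r in a..b, g r = (b - a)⁻¹ * ∫ r in a..b, (g x - g r) := by
      rw [intervalIntegral.integral_sub intervalIntegrable_const hgi,
        intervalIntegral.integral_const, smul_eq_mul]
      field_simp
    have hb : ‖∫ r in a..b, (g x - g r)‖ ≤ S * |b - a| := by
      refine intervalIntegral.norm_integral_le_of_norm_le_const fun r hr => ?_
      rw [Set.uIoc_of_le hab.le] at hr
      exact hpt x hx r (Set.Ioc_subset_Icc_self hr)
    rw [e, abs_mul, abs_of_pos (inv_pos.2 hba), inv_mul_le_iff₀ hba, mul_comm]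
    rwa [abs_of_pos hba] at hb
  calc ∫ t in a..b, (g t - (b - a)⁻¹ * ∫ r in a..b, g r) ^ 2
      ≤ ∫ t in a..b, S ^ 2 := by
        refine intervalIntegral.integral_mono_on hab.le ?_ intervalIntegrable_const ?_
        · refine ContinuousOn.intervalIntegrable ?_
          rw [Set.uIcc_of_le hab.le]
          exact (hg.sub continuousOn_const).pow 2
        · exact fun x hx => sq_le_sq.2 ((hmean x hx).trans (le_abs_self _))
    _ = (b - a) * S ^ 2 := by simp
    _ ≤ _ := by
        rw [sq (b - a), mul_assoc]
        exact mul_le_mul_of_nonneg_left hS2 hba.le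

/-- Error estimate for a piecewise linear interpolant of an `H²` function. -/
lemma Mesh.exists_interpolant {N : ℕ} (m : Mesh N) {H : ℝ} (hH : ∀ i < N, m.h i ≤ H)
    (u : H1) {u'' : ℝ → ℝ} (hm : MemLp u'' 2 unitMeasure)
    (hu : ∀ x ∈ Set.Icc (0:ℝ) 1, u.dval x = u.dval 0 + ∫ t in (0:ℝ)..x, u'' t) :
    ∃ z : H1, z.val 0 = u.val 0 ∧ z.val 1 = u.val 1 ∧ m.IsPL z ∧
      L2 (u.sub z).dval ≤ H * L2 u'' := by
  have hN : 0 < N := by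
    rcases Nat.eq_zero_or_pos N with rfl | h
    · exact absurd (m.x_zero.symm.trans m.x_last) zero_ne_one
    · exact h
  have hH0 : 0 ≤ H := (m.h_pos hN).le.trans (hH 0 hN)
  have hi'' : IntervalIntegrable u'' volume 0 1 :=
    (intervalIntegrable_iff_integrableOn_Ioc_of_le zero_le_one).2 (hm.integrable one_le_two)
  have hsq'' : IntervalIntegrable (fun t => u'' t ^ 2) volume 0 1 :=
    (intervalIntegrable_iff_integrableOn_Ioc_of_le zero_le_one).2 hm.integrable_sq
  have hcont : ContinuousOn u.dval (Set.Icc 0 1) := (HasACDeriv.of_integral hi'' hu).continuousOn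
  set s : ℕ → ℝ := fun i => (m.x (i + 1) - m.x i)⁻¹ * ∫ r in (m.x i)..(m.x (i + 1)), u.dval r
    with hs
  set z := H1.ofDeriv (m.stepFun s) (m.measurable_stepFun s) (m.memLp_stepFun s) (u.val 0) with hz
  have hz0 : z.val 0 = u.val 0 := by simp [hz, H1.ofDeriv]
  have hzd : z.dval = m.stepFun s := rfl
  refine ⟨z, hz0, ?_, fun i hi => ⟨s i, fun t ht => m.stepFun_apply s hi ht⟩, ?_⟩
  · rw [z.ftc 1 (by simp), u.ftc 1 (by simp), hz0, ← m.sum_integral z.dval_int,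
      ← m.sum_integral u.dval_int]
    congr 1
    refine Finset.sum_congr rfl fun i hi => ?_
    have hi := Finset.mem_range.1 hi
    have hne : m.x (i + 1) - m.x i ≠ 0 := (m.h_pos hi).ne'
    rw [hzd, m.integral_stepFun s hi (fun _ y => y), intervalIntegral.integral_const, smul_eq_mul,
      hs, mul_inv_cancel_left₀ hne]
  · refine abs_le_of_sq_le_sq' ?_ (mul_nonneg hH0 (L2_nonneg _)) |>.2
    rw [mul_pow, L2_sq, L2_sq, ← integral_eq_unitMeasure, ← integral_eq_unitMeasure,
      ← m.sum_integral (u.sub z).dval_sq_int, ← m.sum_integral hsq'', Finset.mul_sum]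
    refine Finset.sum_le_sum fun i hi => ?_
    have hi := Finset.mem_range.1 hi
    have hsub := m.Icc_subset hi
    have hlt := m.x_mono i hi
    have e : ∫ t in (m.x i)..(m.x (i + 1)), (u.sub z).dval t ^ 2 =
        ∫ t in (m.x i)..(m.x (i + 1)), (u.dval t - s i) ^ 2 :=
      m.integral_stepFun s hi (fun t y => (u.dval t - y) ^ 2)
    rw [e]
    have hle : Set.Ioc (m.x i) (m.x (i + 1)) ⊆ Set.Ioc 0 1 :=
      Set.Ioc_subset_Ioc (hsub (Set.left_mem_Icc.2 hlt.le)).1 (hsub (Set.right_mem_Icc.2 hlt.le)).2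
    refine (integral_sub_mean_sq_le (g' := u'') hlt (hcont.mono hsub)
      (hm.mono_measure (Measure.restrict_mono hle le_rfl)) ?_).trans ?_
    · intro x hx y hy
      have hmono : ∀ y ∈ Set.Icc (0:ℝ) 1, IntervalIntegrable u'' volume 0 y := fun y hy =>
        hi''.mono_set (Set.uIcc_subset_uIcc_left (by rwa [Set.uIcc_of_le zero_le_one]))
      rw [hu x (hsub hx), hu y (hsub hy), add_sub_add_left_eq_sub,
        intervalIntegral.integral_interval_sub_left (hmono x (hsub hx)) (hmono y (hsub hy))]
    · have h1 := hH i hi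
      have h2 := m.h_pos hi
      unfold Mesh.h at h1 h2
      have h3 : 0 ≤ ∫ t in (m.x i)..(m.x (i + 1)), u'' t ^ 2 :=
        intervalIntegral.integral_nonneg hlt.le fun _ _ => sq_nonneg _
      gcongr

lemma Coeffs.IsFESolution.L2_dval_le {P : Coeffs} {f : ℝ → ℝ} (hf : MemLp f 2 unitMeasure)
    {N : ℕ} {m : Mesh N} {uh : H1} (h : P.IsFESolution f m uh) :
    L2 uh.dval ≤ P.a0⁻¹ * L2 f := by
  have h1 := P.coercive uh h.1 h.2.1
  rw [h.2.2.2 uh h.1 h.2.1 h.2.2.1] at h1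
  have h2 := h1.trans ((le_abs_self _).trans (abs_ip_le hf uh h.1))
  rw [le_inv_mul_iff₀ P.a0_pos]
  rcases (L2_nonneg uh.dval).eq_or_lt with h0 | h0
  · rw [← h0, mul_zero]
    exact L2_nonneg f
  · refine le_of_mul_le_mul_right ?_ h0
    linarith

/-- Céa's lemma. -/
lemma Coeffs.IsFESolution.cea {P : Coeffs} {f : ℝ → ℝ} {M : ℝ}
    (hM : ∀ u v : H1, u.val 0 = 0 → v.val 0 = 0 → |P.B u v| ≤ M * (L2 u.dval * L2 v.dval))
    {u : H1} (hu : P.IsWeakSolution f u) {N : ℕ} {m : Mesh N} {uh : H1}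
    (h : P.IsFESolution f m uh) {z : H1} (hz0 : z.val 0 = 0) (hz1 : z.val 1 = 0)
    (hz : m.IsPL z) (hM0 : 0 ≤ M) :
    P.a0 * L2 (u.sub uh).dval ≤ M * L2 (u.sub z).dval := by
  obtain ⟨hu0, hu1, hu⟩ := hu
  obtain ⟨h0, h1, hpl, h⟩ := h
  have hw0 : (z.sub uh).val 0 = 0 := by simp [H1.sub, hz0, h0]
  have hw1 : (z.sub uh).val 1 = 0 := by simp [H1.sub, hz1, h1]
  have hwpl : m.IsPL (z.sub uh) := fun i hi => by
    obtain ⟨s, hs⟩ := hz i hi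
    obtain ⟨r, hr⟩ := hpl i hi
    exact ⟨s - r, fun t ht => by simp only [H1.sub, hs t ht, hr t ht]⟩
  have he0 : (u.sub uh).val 0 = 0 := by simp [H1.sub, hu0, h0]
  have he1 : (u.sub uh).val 1 = 0 := by simp [H1.sub, hu1, h1]
  have hd0 : (u.sub z).val 0 = 0 := by simp [H1.sub, hu0, hz0]
  have orth : P.B (u.sub uh) (z.sub uh) = 0 := by
    rw [P.B_sub_left, hu _ hw0 hw1, h _ hw0 hw1 hwpl, sub_self]
  have heq : P.B (u.sub uh) (u.sub uh) = P.B (u.sub uh) (u.sub z) := by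
    rw [P.B_sub_right] at orth ⊢
    rw [P.B_sub_right]
    linarith
  have hc := P.coercive _ he0 he1
  rw [heq] at hc
  have hc' := hc.trans ((le_abs_self _).trans (hM _ _ he0 hd0))
  rcases (L2_nonneg (u.sub uh).dval).eq_or_lt with hz | hz
  · rw [← hz, mul_zero]
    exact mul_nonneg hM0 (L2_nonneg _)
  · refine le_of_mul_le_mul_right ?_ hz
    linarith

/-- stability of the finite element solution and the a priori error
bound for meshes with max_i h_i ≤ C₁/N (Lemma 3.6). -/
theorem statement9 (P : Coeffs) :
    (∃ C : ℝ, 0 < C ∧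
      ∀ f : ℝ → ℝ, MemL2 f →
      ∀ (N : ℕ) (m : Mesh N) (uh : H1), P.IsFESolution f m uh →
        L2 uh.dval ≤ C * L2 f) ∧
    (∀ C₁ : ℝ, 0 < C₁ → ∃ C : ℝ, 0 < C ∧
      ∀ f : ℝ → ℝ, MemL2 f →
      ∀ u : H1, P.IsWeakSolution f u → u.IsH2 →
      ∀ (N : ℕ) (m : Mesh N), (∀ i < N, m.h i ≤ C₁ / (N:ℝ)) →
      ∀ uh : H1, P.IsFESolution f m uh →
        L2 (fun t => u.dval t - uh.dval t) ≤ C * L2 (P.res f u) / (N:ℝ)) := by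
  obtain ⟨M, hM0, hM⟩ := P.exists_continuous
  have ha0 := P.a0_pos
  refine ⟨⟨P.a0⁻¹, inv_pos.2 ha0, fun f hf N m uh h =>
    h.L2_dval_le (memLp_two_of_measurable hf.1 hf.2)⟩, fun C₁ hC₁ =>
    ⟨P.a0⁻¹ * ((M + 1) * (C₁ * P.a0⁻¹)), by positivity, ?_⟩⟩
  intro f hf u hu ⟨u'', hm, hi, hsq, hu''⟩ N m hh uh h
  have hf2 := memLp_two_of_measurable hf.1 hf.2
  have hm2 := memLp_two_of_measurable hm hsq
  obtain ⟨z, hz0, hz1, hz, hzle⟩ := m.exists_interpolant hh u hm2 hu''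
  have hcea := h.cea hM hu (hz0.trans hu.1) (hz1.trans hu.2.1) hz hM0
  have hr : L2 u'' ≤ P.a0⁻¹ * L2 (P.res f u) := by
    refine L2_le_mul_L2 (inv_pos.2 ha0).le hm2 (P.memLp_res hf2 u) ?_
    filter_upwards [hu.ae_eq hf2 hm2 (.of_integral hi hu''),
      ae_restrict_mem measurableSet_Ioc] with t ht ht'
    have ha := P.a_lb t (Set.Ioc_subset_Icc_self ht')
    rw [le_inv_mul_iff₀ ha0, eq_neg_of_add_eq_zero_right ht, abs_neg, abs_mul]
    gcongr
    exact ha.trans (le_abs_self _)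
  rw [← le_inv_mul_iff₀ ha0] at hcea
  calc L2 (fun t => u.dval t - uh.dval t) ≤ P.a0⁻¹ * (M * L2 (u.sub z).dval) := hcea
    _ ≤ P.a0⁻¹ * ((M + 1) * (C₁ / N * (P.a0⁻¹ * L2 (P.res f u)))) := by
        have := L2_nonneg (u.sub z).dval
        gcongr
        · linarith
        · exact hzle.trans (by gcongr)
    _ = _ := by ring

end EquidMesh
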